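/- arXiv:1611.02960 — 5 statements merged into one kernel-verified Lean document; each statement's English description precedes it below -/
import Mathlib

section
/- Let Z be a finite set, P a collection of probability mass functions on Z, f : P → ℝ, and ε, δ > 0. Suppose there exists an estimator f̂ : Z → ℝ such that for every p ∈ P, the probability under Z ~ p of the event |f(p) − f̂(Z)| > ε is less than δ. For each z ∈ Z let p_z ∈ P be a maximum-likelihood distribution, i.e., p_z(z) ≥ q(z) for all q ∈ P. Then for every p ∈ P, the probability under Z ~ p of the event |f(p) − f(p_z)| > 2ε is at most δ·|Z|. -/
open scoped Classical

/-- **Maximum-likelihood plug-in property estimation.** Let `Z` be a finite set, `P` a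
collection of probability mass functions on `Z`, and `f` a property. If some estimator
`fhat` estimates `f` to accuracy `ε` with error probability `< δ` for every `p ∈ P`,
then the plug-in estimator based on a maximum-likelihood distribution `pml z`
(satisfying `q z ≤ pml z z` for all `q ∈ P`) estimates `f` to accuracy `2ε` with error
probability at most `δ * |Z|`. -/
theorem ml_plugin_estimation {Z : Type*} [Fintype Z]
    (P : Set (Z → ℝ))
    (hP : ∀ p ∈ P, (∀ z, 0 ≤ p z) ∧ ∑ z, p z = 1)
    (f : (Z → ℝ) → ℝ) (ε δ : ℝ) (hε : 0 < ε) (hδ : 0 < δ)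
    (fhat : Z → ℝ)
    (hest : ∀ p ∈ P, ∑ z ∈ Finset.univ.filter (fun z => ε < |f p - fhat z|), p z < δ)
    (pml : Z → (Z → ℝ))
    (hpml_mem : ∀ z, pml z ∈ P)
    (hpml_max : ∀ z, ∀ q ∈ P, q z ≤ pml z z) :
    ∀ p ∈ P,
      ∑ z ∈ Finset.univ.filter (fun z => 2 * ε < |f p - f (pml z)|), p z
        ≤ δ * Fintype.card Z := by
  intro p hp
  have key : ∀ q ∈ P, ∀ z, δ ≤ q z → |f q - fhat z| ≤ ε := by
    intro q hq z hz
    by_contra hlt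
    have h1 := hest q hq
    have h2 := Finset.single_le_sum (f := q)
      (s := Finset.univ.filter (fun z => ε < |f q - fhat z|))
      (fun i _ => (hP q hq).1 i)
      (Finset.mem_filter.mpr ⟨Finset.mem_univ z, not_le.mp hlt⟩)
    linarith
  have hle : ∀ z ∈ Finset.univ.filter (fun z => 2 * ε < |f p - f (pml z)|), p z ≤ δ := by
    intro z hz
    have hz2 := (Finset.mem_filter.mp hz).2
    by_contra hlt
    have hlt' := not_le.mp hlt
    have h1 := key p hp z hlt'.le
    have h2 := key (pml z) (hpml_mem z) z (hlt'.le.trans (hpml_max z p hp))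
    have h3 := abs_sub_le (f p) (fhat z) (f (pml z))
    rw [abs_sub_comm (fhat z)] at h3
    linarith
  have h := Finset.sum_le_card_nsmul _ _ _ hle
  rw [nsmul_eq_mul, mul_comm _ δ] at h
  refine h.trans (mul_le_mul_of_nonneg_left ?_ hδ.le)
  exact_mod_cast Finset.card_le_univ _
end

section
/- Let Z be a finite set, P a collection of probability mass functions on Z, f : P → ℝ, ε, δ > 0, and 0 < β ≤ 1. Suppose there exists an estimator f̂ : Z → ℝ such that for every p ∈ P, the probability under Z ~ p of the event |f(p) − f̂(Z)| > ε is less than δ. For each z ∈ Z let p̃_z ∈ P be a β-approximate maximum-likelihood distribution, i.e., p̃_z(z) ≥ β·q(z) for all q ∈ P. Then for every p ∈ P, the probability under Z ~ p of the event |f(p) − f(p̃_z)| > 2ε is at most δ·|Z|/β. -/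
open scoped Classical

/-- **Approximate maximum-likelihood plug-in estimation.** Let `Z` be a finite set, `P` a
collection of probability mass functions on `Z`, `f` a property, and `0 < β ≤ 1`. If some
estimator `fhat` estimates `f` to accuracy `ε` with error probability `< δ` for every
`p ∈ P`, then the plug-in estimator based on a `β`-approximate maximum-likelihood
distribution `ptil z` (satisfying `β * q z ≤ ptil z z` for all `q ∈ P`) estimates `f` to
accuracy `2ε` with error probability at most `δ * |Z| / β`. -/
theorem approx_ml_plugin_estimation {Z : Type*} [Fintype Z]
    (P : Set (Z → ℝ))
    (hP : ∀ p ∈ P, (∀ z, 0 ≤ p z) ∧ ∑ z, p z = 1)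
    (f : (Z → ℝ) → ℝ) (ε δ β : ℝ) (hε : 0 < ε) (hδ : 0 < δ)
    (hβ0 : 0 < β) (hβ1 : β ≤ 1)
    (fhat : Z → ℝ)
    (hest : ∀ p ∈ P, ∑ z ∈ Finset.univ.filter (fun z => ε < |f p - fhat z|), p z < δ)
    (ptil : Z → (Z → ℝ))
    (hptil_mem : ∀ z, ptil z ∈ P)
    (hptil_max : ∀ z, ∀ q ∈ P, β * q z ≤ ptil z z) :
    ∀ p ∈ P,
      ∑ z ∈ Finset.univ.filter (fun z => 2 * ε < |f p - f (ptil z)|), p z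
        ≤ δ * Fintype.card Z / β := by
  intro p hp
  have key : ∀ q ∈ P, ∀ z, ε < |f q - fhat z| → q z < δ := by
    intro q hq z hz
    refine lt_of_le_of_lt ?_ (hest q hq)
    exact Finset.single_le_sum (f := q) (fun i _ => (hP q hq).1 i) (by simpa using hz)
  have hb : ∀ z ∈ Finset.univ.filter (fun z => 2 * ε < |f p - f (ptil z)|), p z ≤ δ / β := by
    intro z hz
    have hz' : 2 * ε < |f p - f (ptil z)| := by simpa using hz
    rw [le_div_iff₀ hβ0]
    have h0 := (hP p hp).1 z
    by_cases h : ε < |f p - fhat z|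
    · have := key p hp z h
      nlinarith
    · have h2 : ε < |f (ptil z) - fhat z| := by
        have h3 := abs_sub_le (f p) (fhat z) (f (ptil z))
        rw [abs_sub_comm (fhat z)] at h3
        linarith
      have := key _ (hptil_mem z) z h2
      have := hptil_max z p hp
      linarith
  have h1 := Finset.sum_le_card_nsmul _ _ _ hb
  refine h1.trans ?_
  rw [nsmul_eq_mul, mul_div_right_comm, mul_comm]
  have hc : ((Finset.univ.filter (fun z => 2 * ε < |f p - f (ptil z)|)).card : ℝ)
      ≤ Fintype.card Z := by
    exact_mod_cast Finset.card_le_univ _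
  exact mul_le_mul_of_nonneg_left hc (by positivity)
end

section
/- Let X be a countable alphabet, P a collection of probability mass functions on X, f : P → ℝ, n ≥ 1 a natural number, 0 < α < 1/2, c > 0, ε > 0, and 0 < β ≤ 1. Suppose f̂ : X^n → ℝ is a profile-based estimator (f̂(x^n) depends only on the profile φ(x^n)) such that (i) for every p ∈ P, |E_{X^n iid p}[f̂(X^n)] − f(p)| ≤ ε, and (ii) changing any single coordinate of the input changes f̂ by at most c·n^α/n. For each profile φ ∈ Φ^n let p̃_φ ∈ P satisfy p̃_φ(φ) ≥ β·q(φ) for all q ∈ P (a β-approximate profile maximum likelihood distribution). If 2ε²·n^{1−2α}/c² ≥ 6√n + log 2 and β ≥ exp(−√n), then for every p ∈ P, the probability under X^n iid from p that |f(p) − f(p̃_{φ(X^n)})| > 4ε is at most exp(−√n). -/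
open scoped Classical

/-- The profile of a sequence `x : Fin n → X`: the multiset of multiplicities of the
symbols appearing in the sequence. -/
noncomputable def profile {X : Type*} [DecidableEq X] {n : ℕ} (x : Fin n → X) :
    Multiset ℕ :=
  (Finset.univ.image x).val.map fun a => (Finset.univ.filter fun i => x i = a).card

/-- The probability of the sequence `x` under i.i.d. sampling from `p`. -/
noncomputable def seqProb {X : Type*} {n : ℕ} (p : X → ℝ) (x : Fin n → X) : ℝ :=
  ∏ i, p (x i)

/-- The probability under i.i.d. sampling from `p` that `n` samples form a sequence
with profile `φ`. -/
noncomputable def profProb {X : Type*} [DecidableEq X] [Countable X] (n : ℕ)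
    (p : X → ℝ) (φ : Multiset ℕ) : ℝ :=
  ∑' x : Fin n → X, if profile x = φ then seqProb p x else 0

theorem aux_geo (n : ℕ) (u : ℝ) (hu : 0 < u) :
    ∑ j : Fin n, (Real.exp (-u)) ^ ((j : ℕ) + 1) ≤ 1 / u := by
  have hy0 := Real.exp_pos (-u)
  have hy1 : Real.exp (-u) < 1 := by rw [Real.exp_lt_one_iff]; linarith
  have hyu : Real.exp (-u) * (1 + u) ≤ 1 := by
    have h1 : 1 + u ≤ Real.exp u := by linarith [Real.add_one_le_exp u]
    calc _ ≤ Real.exp (-u) * Real.exp u := by gcongr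
      _ = 1 := by rw [← Real.exp_add]; simp
  generalize Real.exp (-u) = y at *
  rw [Fin.sum_univ_eq_sum_range (fun j => y ^ (j + 1)) n]
  have h2 : ∑ j ∈ Finset.range n, y ^ (j + 1) = y * ∑ j ∈ Finset.range n, y ^ j := by
    rw [Finset.mul_sum]; exact Finset.sum_congr rfl (fun _ _ => by ring)
  have h3 : (∑ j ∈ Finset.range n, y ^ j) * (1 - y) ≤ 1 := by
    have := geom_sum_mul y n
    have h4 : 0 ≤ y ^ n := by positivity
    nlinarith
  have h5 : 0 ≤ ∑ j ∈ Finset.range n, y ^ j := Finset.sum_nonneg (fun _ _ => by positivity)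
  rw [h2, le_div_iff₀ hu]
  nlinarith

theorem aux_logsum (n : ℕ) (s : ℝ) (hs : 0 < s) :
    ∑ j : Fin n, -Real.log (1 - Real.exp (-s) ^ ((j : ℕ) + 1)) ≤ (Real.pi ^ 2 / 6) / s := by
  have hy0 := Real.exp_pos (-s)
  have hy1 : Real.exp (-s) < 1 := by rw [Real.exp_lt_one_iff]; linarith
  have h1 : HasSum (fun m : ℕ => ∑ j : Fin n,
      (Real.exp (-s) ^ ((j : ℕ) + 1)) ^ (m + 1) / ((m : ℝ) + 1))
      (∑ j : Fin n, -Real.log (1 - Real.exp (-s) ^ ((j : ℕ) + 1))) := by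
    apply hasSum_sum
    intro j _
    apply Real.hasSum_pow_div_log_of_abs_lt_one
    rw [abs_of_pos (by positivity)]
    exact pow_lt_one₀ hy0.le hy1 (by omega)
  have h2 : HasSum (fun m : ℕ => (1 / ((m + 1 : ℕ) : ℝ) ^ 2)) (Real.pi ^ 2 / 6) := by
    have := (hasSum_nat_add_iff' (f := fun m : ℕ => (1 / (m : ℝ) ^ 2)) 1).2 hasSum_zeta_two
    simpa using this
  have h3 := h2.div_const s
  refine hasSum_le ?_ h1 h3
  intro m
  rw [← Finset.sum_div]
  have h4 := aux_geo n (s * ((m : ℝ) + 1)) (by positivity)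
  have h5 : ∑ j : Fin n, (Real.exp (-s) ^ ((j : ℕ) + 1)) ^ (m + 1)
      = ∑ j : Fin n, (Real.exp (-(s * ((m : ℝ) + 1)))) ^ ((j : ℕ) + 1) := by
    refine Finset.sum_congr rfl fun j _ => ?_
    rw [← Real.exp_nat_mul, ← Real.exp_nat_mul, ← Real.exp_nat_mul]
    congr 1
    push_cast
    ring
  rw [h5]
  push_cast
  calc _ ≤ (1 / (s * ((m : ℝ) + 1))) / ((m : ℝ) + 1) := by gcongr
    _ = _ := by field_simp

theorem aux_part_prod (n : ℕ) (x : ℝ) (hx0 : 0 < x) (hx1 : x < 1) :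
    (Fintype.card (Nat.Partition n) : ℝ) * x ^ n ≤
      ∏ j : Fin n, (1 - x ^ ((j : ℕ) + 1))⁻¹ := by
  let cnt : Nat.Partition n → (Fin n → ℕ) := fun P j => P.parts.count ((j : ℕ) + 1)
  have hle : ∀ (P : Nat.Partition n) (i : ℕ), i ∈ P.parts → i ≤ n := by
    intro P i hi
    have := Multiset.le_sum_of_mem hi
    rwa [P.parts_sum] at this
  have hinj : Function.Injective cnt := by
    intro P Q h
    apply Nat.Partition.ext
    ext i
    by_cases hi0 : i = 0
    · subst hi0
      rw [Multiset.count_eq_zero_of_notMem, Multiset.count_eq_zero_of_notMem]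
      · intro h0; exact absurd (Q.parts_pos h0) (by simp)
      · intro h0; exact absurd (P.parts_pos h0) (by simp)
    · by_cases hin : i ≤ n
      · have := congrFun h ⟨i - 1, by omega⟩
        simp only [cnt] at this
        rwa [show i - 1 + 1 = i by omega] at this
      · rw [Multiset.count_eq_zero_of_notMem, Multiset.count_eq_zero_of_notMem]
        · intro h0; exact hin (hle Q i h0)
        · intro h0; exact hin (hle P i h0)
  have hsum : ∀ P : Nat.Partition n, ∑ j : Fin n, ((j : ℕ) + 1) * cnt P j = n := by
    intro P
    have h1 := Finset.sum_multiset_count P.parts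
    rw [P.parts_sum] at h1
    have h2 : ∑ m ∈ P.parts.toFinset, Multiset.count m P.parts • m
        = ∑ m ∈ (Finset.range n).image (fun j => j + 1), Multiset.count m P.parts • m := by
      apply Finset.sum_subset
      · intro i hi
        rw [Multiset.mem_toFinset] at hi
        have := hle P i hi
        have h3 := P.parts_pos hi
        rw [Finset.mem_image]
        exact ⟨i - 1, by simp; omega, by omega⟩
      · intro i _ hi
        rw [Multiset.mem_toFinset] at hi
        rw [Multiset.count_eq_zero_of_notMem hi, zero_smul]
    rw [h2, Finset.sum_image (by intro a _ b _ h; simpa using h)] at h1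
    conv_rhs => rw [h1]
    rw [← Fin.sum_univ_eq_sum_range (fun m => Multiset.count (m+1) P.parts • (m+1)) n]
    refine Finset.sum_congr rfl fun j _ => ?_
    simp only [cnt, smul_eq_mul]; ring
  have hcnt : ∀ P : Nat.Partition n, cnt P ∈ Fintype.piFinset (fun _ : Fin n => Finset.range (n+1)) := by
    intro P
    rw [Fintype.mem_piFinset]
    intro j
    have h1 : ((j : ℕ) + 1) * cnt P j ≤ n := by
      conv_rhs => rw [← hsum P]
      exact Finset.single_le_sum (f := fun j : Fin n => ((j : ℕ) + 1) * cnt P j)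
        (fun _ _ => Nat.zero_le _) (Finset.mem_univ j)
    rw [Finset.mem_range]
    nlinarith
  calc (Fintype.card (Nat.Partition n) : ℝ) * x ^ n
      = ∑ P : Nat.Partition n, ∏ j : Fin n, (x ^ ((j : ℕ) + 1)) ^ (cnt P j) := by
        have : ∀ P : Nat.Partition n, ∏ j : Fin n, (x ^ ((j : ℕ) + 1)) ^ (cnt P j) = x ^ n := by
          intro P
          conv_rhs => rw [← hsum P]
          rw [← Finset.prod_pow_eq_pow_sum]
          exact Finset.prod_congr rfl fun j _ => by rw [pow_mul]
        simp [this]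
    _ = ∑ m ∈ (Finset.univ : Finset (Nat.Partition n)).image cnt,
          ∏ j : Fin n, (x ^ ((j : ℕ) + 1)) ^ (m j) := by
        rw [Finset.sum_image (hinj.injOn)]
    _ ≤ ∑ m ∈ Fintype.piFinset (fun _ : Fin n => Finset.range (n+1)),
          ∏ j : Fin n, (x ^ ((j : ℕ) + 1)) ^ (m j) := by
        apply Finset.sum_le_sum_of_subset_of_nonneg
        · intro m hm
          rw [Finset.mem_image] at hm
          obtain ⟨P, _, rfl⟩ := hm
          exact hcnt P
        · intro m _ _
          positivity
    _ = ∏ j : Fin n, ∑ m ∈ Finset.range (n+1), (x ^ ((j : ℕ) + 1)) ^ m := by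
        rw [Finset.prod_univ_sum]
    _ ≤ _ := by
        apply Finset.prod_le_prod
        · intro j _; positivity
        · intro j _
          have h1 : x ^ ((j : ℕ) + 1) < 1 := pow_lt_one₀ hx0.le hx1 (by omega)
          have h0 : 0 < x ^ ((j : ℕ) + 1) := by positivity
          rw [← tsum_geometric_of_lt_one h0.le h1]
          exact (summable_geometric_of_lt_one h0.le h1).sum_le_tsum _ (fun _ _ => by positivity)

theorem aux_part_bound (n : ℕ) (hn : 1 ≤ n) :
    (Fintype.card (Nat.Partition n) : ℝ) ≤ Real.exp (4 * Real.sqrt n) := by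
  have hn' : (0 : ℝ) < n := by exact_mod_cast hn
  have hq : 0 < Real.sqrt n := Real.sqrt_pos.2 hn'
  set s : ℝ := 1 / Real.sqrt n with hs
  have hs0 : 0 < s := by positivity
  have hy0 := Real.exp_pos (-s)
  have hy1 : Real.exp (-s) < 1 := by rw [Real.exp_lt_one_iff]; linarith
  have h1 := aux_part_prod n (Real.exp (-s)) hy0 hy1
  have h2 := aux_logsum n s hs0
  have h3 : ∏ j : Fin n, (1 - Real.exp (-s) ^ ((j : ℕ) + 1))⁻¹ =
      Real.exp (∑ j : Fin n, -Real.log (1 - Real.exp (-s) ^ ((j : ℕ) + 1))) := by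
    rw [Real.exp_sum]
    refine Finset.prod_congr rfl fun j _ => ?_
    have : Real.exp (-s) ^ ((j : ℕ) + 1) < 1 := pow_lt_one₀ hy0.le hy1 (by omega)
    rw [Real.exp_neg (Real.log _), Real.exp_log (by linarith)]
  have h4 : Real.exp (-s) ^ n = Real.exp (-Real.sqrt n) := by
    rw [← Real.exp_nat_mul]
    congr 1
    rw [hs]
    field_simp
    rw [Real.sq_sqrt hn'.le]
  rw [h3, h4] at h1
  have hpi : Real.pi ^ 2 / 6 ≤ 3 := by nlinarith [Real.pi_lt_four, Real.pi_pos]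
  have h5 : (Real.pi ^ 2 / 6) / s ≤ 3 * Real.sqrt n := by
    rw [hs, div_div_eq_mul_div, div_one]; gcongr
  have h6 : (Fintype.card (Nat.Partition n) : ℝ) * Real.exp (-Real.sqrt n) ≤
      Real.exp (3 * Real.sqrt n) := h1.trans (Real.exp_le_exp.2 (h2.trans h5))
  calc (Fintype.card (Nat.Partition n) : ℝ)
      = (Fintype.card (Nat.Partition n) : ℝ) * Real.exp (-Real.sqrt n) * Real.exp (Real.sqrt n) := by
        rw [mul_assoc, ← Real.exp_add]; simp
    _ ≤ Real.exp (3 * Real.sqrt n) * Real.exp (Real.sqrt n) := by gcongr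
    _ = _ := by rw [← Real.exp_add]; congr 1; ring

theorem aux_profile_mem {X : Type*} [DecidableEq X] {n : ℕ} (x : Fin n → X) :
    profile x ∈ (Finset.univ : Finset (Nat.Partition n)).image Nat.Partition.parts := by
  rw [Finset.mem_image]
  refine ⟨⟨profile x, ?_, ?_⟩, Finset.mem_univ _, rfl⟩
  · intro i hi
    unfold profile at hi
    rw [Multiset.mem_map] at hi
    obtain ⟨a, ha, rfl⟩ := hi
    rw [Finset.card_pos]
    simp only [Finset.mem_val, Finset.mem_image] at ha
    obtain ⟨j, _, hj⟩ := ha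
    exact ⟨j, by simp [hj]⟩
  · unfold profile
    have := Finset.card_eq_sum_card_image x (Finset.univ : Finset (Fin n))
    rw [Finset.card_univ, Fintype.card_fin] at this
    exact this.symm

theorem sp_nonneg {X : Type*} {n : ℕ} {p : X → ℝ} (hp : ∀ x, 0 ≤ p x) (x : Fin n → X) :
    0 ≤ seqProb p x := Finset.prod_nonneg fun i _ => hp (x i)

theorem sp_cons {X : Type*} {n : ℕ} (p : X → ℝ) (a : X) (y : Fin n → X) :
    seqProb p (Fin.cons a y : Fin (n+1) → X) = p a * seqProb p y := by
  simp [seqProb, Fin.prod_univ_succ]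

theorem sp_summable {X : Type*} {p : X → ℝ} (hp : ∀ x, 0 ≤ p x) (hs : Summable p) (n : ℕ) :
    Summable (fun x : Fin n → X => seqProb p x) := by
  induction n with
  | zero => exact (hasSum_fintype _).summable
  | succ n ih =>
    rw [← (Fin.consEquiv (fun _ : Fin (n+1) => X)).summable_iff]
    have := hs.mul_of_nonneg ih hp (fun x => sp_nonneg hp x)
    refine this.congr ?_
    rintro ⟨a, y⟩
    exact (sp_cons p a y).symm

theorem sum_bdd {I : Type*} {w g : I → ℝ} (hw : ∀ i, 0 ≤ w i) (hs : Summable w) (B : ℝ)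
    (hB : ∀ i, |g i| ≤ B) : Summable (fun i => w i * g i) := by
  refine Summable.of_norm_bounded (hs.mul_right B) fun i => ?_
  rw [Real.norm_eq_abs, abs_mul, abs_of_nonneg (hw i)]
  exact mul_le_mul_of_nonneg_left (hB i) (hw i)

theorem sp_tsum_succ {X : Type*} {p : X → ℝ} (hp : ∀ x, 0 ≤ p x) (hs : Summable p) {n : ℕ}
    (g : (Fin (n+1) → X) → ℝ) (B : ℝ) (hB : ∀ x, |g x| ≤ B) :
    ∑' x, seqProb p x * g x =
      ∑' a, p a * ∑' y : Fin n → X, seqProb p y * g (Fin.cons a y) := by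
  have h1 := sum_bdd (fun x => sp_nonneg hp x) (sp_summable hp hs (n+1)) B hB
  rw [← (Fin.consEquiv (fun _ : Fin (n+1) => X)).tsum_eq]
  have h2 := (Fin.consEquiv (fun _ : Fin (n+1) => X)).summable_iff.2 h1
  refine (h2.tsum_prod).trans ?_
  refine tsum_congr fun a => ?_
  rw [← tsum_mul_left]
  refine tsum_congr fun y => ?_
  have := sp_cons p a y
  change seqProb p (Fin.cons a y : Fin (n+1) → X) * g (Fin.cons a y) = _
  rw [this, mul_assoc]

theorem sp_tsum {X : Type*} {p : X → ℝ} (hp : ∀ x, 0 ≤ p x) (hs : Summable p)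
    (h1 : ∑' x, p x = 1) (n : ℕ) : ∑' x : Fin n → X, seqProb p x = 1 := by
  induction n with
  | zero => rw [tsum_fintype]; simp [seqProb]
  | succ n ih =>
    have := sp_tsum_succ hp hs (n := n) (fun _ => 1) 1 (by simp)
    simpa [ih, h1] using this

theorem avg_bdd {I : Type*} {w g : I → ℝ} (hw : ∀ i, 0 ≤ w i) (hs : Summable w)
    (h1 : ∑' i, w i = 1) (B : ℝ) (hB : ∀ i, |g i| ≤ B) : |∑' i, w i * g i| ≤ B := by
  have h := sum_bdd hw hs B hB
  have e : ∑' i, w i * B = B := by rw [tsum_mul_right, h1, one_mul]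
  have e' : ∑' i, w i * (-B) = -B := by rw [tsum_mul_right, h1, one_mul]
  rw [abs_le]
  constructor
  · rw [← e']
    exact Summable.tsum_le_tsum (fun i => mul_le_mul_of_nonneg_left (abs_le.1 (hB i)).1 (hw i))
      (hs.mul_right _) h
  · conv_rhs => rw [← e]
    exact Summable.tsum_le_tsum (fun i => mul_le_mul_of_nonneg_left (abs_le.1 (hB i)).2 (hw i))
      h (hs.mul_right _)

open MeasureTheory ProbabilityTheory in
theorem hoeff {X : Type*} [Countable X] {p : X → ℝ} (hp : ∀ x, 0 ≤ p x) (hs : Summable p)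
    (h1 : ∑' x, p x = 1) (h : X → ℝ) (C : ℝ) (hC0 : 0 ≤ C) (hC : ∀ a b, |h a - h b| ≤ C)
    (t : ℝ) :
    ∑' a, p a * Real.exp (t * (h a - ∑' b, p b * h b)) ≤ Real.exp (t ^ 2 * C ^ 2 / 8) := by
  have hne : Nonempty X := by
    by_contra hE
    rw [not_nonempty_iff] at hE
    simp at h1
  let _ : MeasurableSpace X := ⊤
  have hmc : MeasurableSingletonClass X := ⟨fun _ => trivial⟩
  have hsum : ∑' a, ENNReal.ofReal (p a) = 1 := by
    rw [← ENNReal.ofReal_tsum_of_nonneg hp hs, h1, ENNReal.ofReal_one]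
  let q : PMF X := ⟨fun a => ENNReal.ofReal (p a), by
    have := ENNReal.summable.hasSum (f := fun a => ENNReal.ofReal (p a))
    rwa [hsum] at this⟩
  have hq : ∀ a, (q a).toReal = p a := fun a => ENNReal.toReal_ofReal (hp a)
  obtain ⟨a0⟩ := hne
  have hbb : BddBelow (Set.range h) := ⟨h a0 - C, by
    rintro _ ⟨b, rfl⟩
    have := abs_le.1 (hC a0 b); linarith⟩
  have : Nonempty X := ⟨a0⟩
  have hIcc : ∀ a, h a ∈ Set.Icc (⨅ b, h b) ((⨅ b, h b) + C) := by
    intro a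
    refine ⟨ciInf_le hbb a, ?_⟩
    have : h a - C ≤ ⨅ b, h b := le_ciInf fun b => by
      have := abs_le.1 (hC a b); linarith
    linarith
  have hmeas : ∀ g : X → ℝ, Measurable g := fun g => fun _ _ => trivial
  have key := hasSubgaussianMGF_of_mem_Icc (μ := q.toMeasure) (hmeas h).aemeasurable
    (Filter.Eventually.of_forall hIcc)
  have hint : Integrable h q.toMeasure :=
    Integrable.of_mem_Icc _ _ (hmeas h).aemeasurable (Filter.Eventually.of_forall hIcc)
  have hE : ∫ a, h a ∂q.toMeasure = ∑' b, p b * h b := by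
    rw [PMF.integral_eq_tsum q h hint]
    exact tsum_congr fun a => by rw [hq, smul_eq_mul]
  have k1 := key.mgf_le t
  have k2 := key.integrable_exp_mul t
  rw [mgf, PMF.integral_eq_tsum q _ k2, hE] at k1
  simp only [hq, smul_eq_mul] at k1
  refine k1.trans (le_of_eq ?_)
  congr 1
  have : ((((‖(⨅ b, h b) + C - ⨅ b, h b‖₊ / 2) ^ 2 : NNReal)) : ℝ) = (C / 2) ^ 2 := by
    push_cast
    rw [add_sub_cancel_left, Real.norm_eq_abs, abs_of_nonneg hC0]
  rw [this]; ring

theorem bd_bounded {X : Type*} {n : ℕ} (C : ℝ)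
    (g : (Fin n → X) → ℝ)
    (hg : ∀ (x y : Fin n → X) (j : Fin n), (∀ i, i ≠ j → x i = y i) → |g x - g y| ≤ C) :
    ∀ x y, |g x - g y| ≤ n * C := by
  induction n with
  | zero => intro x y; rw [Subsingleton.elim x y]; simp
  | succ n ih =>
    intro x y
    rw [← Fin.cons_self_tail x, ← Fin.cons_self_tail y]
    have h1 := hg (Fin.cons (x 0) (Fin.tail x)) (Fin.cons (y 0) (Fin.tail x)) 0 (by
      intro i hi
      obtain ⟨k, rfl⟩ := Fin.exists_succ_eq.2 hi
      simp)
    have h2 := ih (fun z => g (Fin.cons (y 0) z)) (by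
      intro u v j huv
      apply hg _ _ j.succ
      intro i hi
      cases i using Fin.cases with
      | zero => simp
      | succ k => simpa using huv k (fun h => hi (by rw [h]))) (Fin.tail x) (Fin.tail y)
    have h3 := abs_sub_le (g (Fin.cons (x 0) (Fin.tail x))) (g (Fin.cons (y 0) (Fin.tail x)))
      (g (Fin.cons (y 0) (Fin.tail y)))
    push_cast
    linarith

theorem mcd_mgf {X : Type*} [Countable X] {p : X → ℝ} (hp : ∀ x, 0 ≤ p x) (hs : Summable p)
    (h1 : ∑' x, p x = 1) (C : ℝ) (hC0 : 0 ≤ C) (t : ℝ) (n : ℕ) (B : ℝ) :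
    ∀ (g : (Fin n → X) → ℝ), (∀ x, |g x| ≤ B) →
    (∀ (x y : Fin n → X) (j : Fin n), (∀ i, i ≠ j → x i = y i) → |g x - g y| ≤ C) →
    ∑' x, seqProb p x * Real.exp (t * (g x - ∑' y, seqProb p y * g y)) ≤
      Real.exp (n * (t ^ 2 * C ^ 2 / 8)) := by
  induction n with
  | zero =>
    intro g _ _
    rw [tsum_fintype, tsum_fintype]
    simp [seqProb]
  | succ n ih =>
    intro g hB hg
    have hw := fun x : Fin n → X => sp_nonneg hp x
    have hsn := sp_summable hp hs n
    have hn1 := sp_tsum hp hs h1 n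
    set h : X → ℝ := fun a => ∑' y : Fin n → X, seqProb p y * g (Fin.cons a y) with hh
    have hE : ∑' y, seqProb p y * g y = ∑' a, p a * h a := sp_tsum_succ hp hs g B hB
    have hhB : ∀ a, |h a| ≤ B := fun a => avg_bdd hw hsn hn1 B fun y => hB _
    have hhC : ∀ a b, |h a - h b| ≤ C := by
      intro a b
      have e : h a - h b = ∑' y : Fin n → X, seqProb p y * (g (Fin.cons a y) - g (Fin.cons b y)) := by
        simp only [hh, mul_sub]
        rw [Summable.tsum_sub (sum_bdd hw hsn B fun y => hB _) (sum_bdd hw hsn B fun y => hB _)]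
      rw [e]
      refine avg_bdd hw hsn hn1 C fun y => ?_
      apply hg _ _ 0
      intro i hi
      obtain ⟨k, rfl⟩ := Fin.exists_succ_eq.2 hi
      simp
    rw [hE]
    set M := ∑' a, p a * h a with hM
    have hMB : |M| ≤ B := avg_bdd hp hs h1 B hhB
    have hexp : ∀ u v : ℝ, |u| ≤ B → |v| ≤ B →
        |Real.exp (t * (u - v))| ≤ Real.exp (|t| * (2 * B)) := by
      intro u v hu hv
      rw [Real.abs_exp, Real.exp_le_exp]
      calc t * (u - v) ≤ |t * (u - v)| := le_abs_self _
        _ = |t| * |u - v| := abs_mul _ _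
        _ ≤ _ := by
          gcongr
          have := abs_sub u v
          linarith
    rw [sp_tsum_succ hp hs (fun x => Real.exp (t * (g x - M))) (Real.exp (|t| * (2 * B)))
      (fun x => hexp _ _ (hB x) hMB)]
    set K := Real.exp (n * (t ^ 2 * C ^ 2 / 8)) with hK
    have hinner : ∀ a, ∑' y : Fin n → X, seqProb p y * Real.exp (t * (g (Fin.cons a y) - M))
        ≤ K * Real.exp (t * (h a - M)) := by
      intro a
      have h2 := ih (fun y => g (Fin.cons a y)) (fun y => hB _) (by
        intro u v j huv
        apply hg _ _ j.succ
        intro i hi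
        cases i using Fin.cases with
        | zero => simp
        | succ k => simpa using huv k (fun h => hi (by rw [h])))
      have e : ∑' y : Fin n → X, seqProb p y * Real.exp (t * (g (Fin.cons a y) - M)) =
          (∑' y : Fin n → X, seqProb p y * Real.exp (t * (g (Fin.cons a y) - h a))) *
            Real.exp (t * (h a - M)) := by
        rw [← tsum_mul_right]
        refine tsum_congr fun y => ?_
        rw [mul_assoc, ← Real.exp_add]
        congr 2; ring
      rw [e]
      gcongr
    have hab : ∀ a, |∑' y : Fin n → X, seqProb p y * Real.exp (t * (g (Fin.cons a y) - M))|
        ≤ Real.exp (|t| * (2 * B)) := fun a =>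
      avg_bdd hw hsn hn1 _ fun y => hexp _ _ (hB _) hMB
    have hsa : Summable fun a => p a * Real.exp (t * (h a - M)) :=
      sum_bdd hp hs _ fun a => hexp _ _ (hhB a) hMB
    calc _ ≤ ∑' a, K * (p a * Real.exp (t * (h a - M))) := by
          apply Summable.tsum_le_tsum _ (sum_bdd hp hs _ hab) (hsa.mul_left K)
          intro a
          calc _ ≤ p a * (K * Real.exp (t * (h a - M))) :=
                mul_le_mul_of_nonneg_left (hinner a) (hp a)
            _ = _ := by ring
      _ = K * ∑' a, p a * Real.exp (t * (h a - M)) := tsum_mul_left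
      _ ≤ K * Real.exp (t ^ 2 * C ^ 2 / 8) := by
          gcongr
          exact hoeff hp hs h1 h C hC0 hhC t
      _ = _ := by
          rw [hK, ← Real.exp_add]; congr 1; push_cast; ring

theorem mcd_tail {X : Type*} [Countable X] {p : X → ℝ} (hp : ∀ x, 0 ≤ p x) (hs : Summable p)
    (h1 : ∑' x, p x = 1) (C : ℝ) (hC0 : 0 < C) (n : ℕ) (hn : 1 ≤ n) (ε : ℝ) (hε : 0 < ε)
    (g : (Fin n → X) → ℝ)
    (hg : ∀ (x y : Fin n → X) (j : Fin n), (∀ i, i ≠ j → x i = y i) → |g x - g y| ≤ C) :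
    ∑' x, (if ε < |g x - ∑' y, seqProb p y * g y| then seqProb p x else 0) ≤
      2 * Real.exp (-(2 * ε ^ 2 / (n * C ^ 2))) := by
  have hne : Nonempty X := by
    by_contra hE
    rw [not_nonempty_iff] at hE
    simp at h1
  obtain ⟨a0⟩ := hne
  have hn' : (0 : ℝ) < n := by exact_mod_cast hn
  have hB : ∃ B, ∀ x, |g x| ≤ B := by
    refine ⟨n * C + |g (fun _ => a0)|, fun x => ?_⟩
    have h2 := bd_bounded C g hg x (fun _ => a0)
    have h3 := abs_sub_abs_le_abs_sub (g x) (g (fun _ => a0))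
    linarith
  obtain ⟨B, hB⟩ := hB
  have hw := fun x : Fin n → X => sp_nonneg hp x
  have hsn := sp_summable hp hs n
  have hn1 := sp_tsum hp hs h1 n
  set M := ∑' y, seqProb p y * g y with hM
  have hMB : |M| ≤ B := avg_bdd hw hsn hn1 B hB
  have hexp : ∀ t u v : ℝ, |u| ≤ B → |v| ≤ B →
      |Real.exp (t * (u - v))| ≤ Real.exp (|t| * (2 * B)) := by
    intro t u v hu hv
    rw [Real.abs_exp, Real.exp_le_exp]
    calc t * (u - v) ≤ |t * (u - v)| := le_abs_self _
      _ = |t| * |u - v| := abs_mul _ _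
      _ ≤ _ := by
        gcongr
        have := abs_sub u v
        linarith
  set t : ℝ := 4 * ε / (n * C ^ 2) with ht
  have ht0 : 0 < t := by positivity
  have m1 := mcd_mgf hp hs h1 C hC0.le t n B g hB hg
  have m2 := mcd_mgf hp hs h1 C hC0.le (-t) n B g hB hg
  rw [← hM] at m1 m2
  have s1 : ∀ t, Summable fun x => seqProb p x * Real.exp (t * (g x - M)) := fun t =>
    sum_bdd hw hsn _ fun x => hexp t _ _ (hB x) hMB
  have hsI : Summable fun x => (if ε < |g x - M| then seqProb p x else 0) := by
    refine Summable.of_nonneg_of_le (fun x => ?_) (fun x => ?_) hsn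
    · split_ifs; exacts [hw x, le_rfl]
    · split_ifs; exacts [le_rfl, hw x]
  have hpt : ∀ x, (if ε < |g x - M| then seqProb p x else 0) ≤
      Real.exp (-(t * ε)) * (seqProb p x * Real.exp (t * (g x - M)) +
        seqProb p x * Real.exp (-t * (g x - M))) := by
    intro x
    have hx := hw x
    split_ifs with hc
    · have : 1 ≤ Real.exp (-(t * ε)) * (Real.exp (t * (g x - M)) + Real.exp (-t * (g x - M))) := by
        rw [mul_add, ← Real.exp_add, ← Real.exp_add]
        rcases lt_abs.1 hc with h | h
        · have : 1 ≤ Real.exp (-(t * ε) + t * (g x - M)) := Real.one_le_exp (by nlinarith)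
          linarith [Real.exp_pos (-(t * ε) + -t * (g x - M))]
        · have : 1 ≤ Real.exp (-(t * ε) + -t * (g x - M)) := Real.one_le_exp (by nlinarith)
          linarith [Real.exp_pos (-(t * ε) + t * (g x - M))]
      calc seqProb p x = seqProb p x * 1 := (mul_one _).symm
        _ ≤ seqProb p x * _ := mul_le_mul_of_nonneg_left this hx
        _ = _ := by ring
    · positivity
  calc _ ≤ _ := Summable.tsum_le_tsum hpt hsI (((s1 t).add (s1 (-t))).mul_left _)
    _ = Real.exp (-(t * ε)) * (∑' x, seqProb p x * Real.exp (t * (g x - M)) +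
        ∑' x, seqProb p x * Real.exp (-t * (g x - M))) := by
        rw [tsum_mul_left, Summable.tsum_add (s1 t) (s1 (-t))]
    _ ≤ Real.exp (-(t * ε)) * (Real.exp (n * (t ^ 2 * C ^ 2 / 8)) +
        Real.exp (n * ((-t) ^ 2 * C ^ 2 / 8))) := by gcongr
    _ = 2 * Real.exp (-(t * ε) + n * (t ^ 2 * C ^ 2 / 8)) := by
        rw [Real.exp_add, neg_sq]; ring
    _ = _ := by
        congr 2
        rw [ht]
        field_simp
        ring

/-- **Sample-optimality of approximate PML plug-in estimation.** If a profile-based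
estimator `fhat` on `n` samples has bias at most `ε` on every `p ∈ P` and bounded
differences `c * n^α / n`, and if `2ε²·n^{1-2α}/c² ≥ 6√n + log 2` and
`β ≥ exp(-√n)`, then the plug-in estimator using any `β`-approximate profile maximum
likelihood distribution estimates `f p` to accuracy `4ε` with error probability at most
`exp(-√n)`. -/
theorem approx_pml_plugin_sharp {X : Type*} [DecidableEq X] [Countable X]
    (P : Set (X → ℝ)) (hP : ∀ p ∈ P, (∀ x, 0 ≤ p x) ∧ ∑' x, p x = 1)
    (f : (X → ℝ) → ℝ)
    (n : ℕ) (hn : 1 ≤ n) (α c ε β : ℝ)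
    (hα0 : 0 < α) (hα1 : α < 1 / 2) (hc : 0 < c) (hε : 0 < ε)
    (hβ0 : 0 < β) (hβ1 : β ≤ 1)
    (fhat : (Fin n → X) → ℝ)
    (hprofileBased : ∀ x y : Fin n → X, profile x = profile y → fhat x = fhat y)
    (hbias : ∀ p ∈ P, |(∑' x : Fin n → X, seqProb p x * fhat x) - f p| ≤ ε)
    (hbd : ∀ (x y : Fin n → X) (j : Fin n), x j ≠ y j → (∀ i, i ≠ j → x i = y i) →
      |fhat x - fhat y| ≤ c * (n : ℝ) ^ α / n)
    (ptil : Multiset ℕ → (X → ℝ))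
    (hptil_mem : ∀ x : Fin n → X, ptil (profile x) ∈ P)
    (hptil_max : ∀ x : Fin n → X, ∀ q ∈ P,
      β * profProb n q (profile x) ≤ profProb n (ptil (profile x)) (profile x))
    (hcond : 6 * Real.sqrt n + Real.log 2 ≤ 2 * ε ^ 2 * (n : ℝ) ^ (1 - 2 * α) / c ^ 2)
    (hβ : Real.exp (-Real.sqrt n) ≤ β) :
    ∀ p ∈ P,
      (∑' x : Fin n → X,
          if 4 * ε < |f p - f (ptil (profile x))| then seqProb p x else 0)
        ≤ Real.exp (-Real.sqrt n) := by
  have hn' : (0 : ℝ) < n := by exact_mod_cast hn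
  have hsm : ∀ p ∈ P, Summable p := by
    intro p hp
    by_contra h
    have := (hP p hp).2
    rw [tsum_eq_zero_of_not_summable h] at this
    exact zero_ne_one this
  have hC0 : 0 < c * (n : ℝ) ^ α / n := by positivity
  set C : ℝ := c * (n : ℝ) ^ α / n with hC
  have hg : ∀ (x y : Fin n → X) (j : Fin n), (∀ i, i ≠ j → x i = y i) →
      |fhat x - fhat y| ≤ C := by
    intro x y j h
    by_cases hj : x j = y j
    · have : x = y := by
        ext i
        by_cases hi : i = j
        · rw [hi, hj]
        · exact h i hi
      rw [this]; simpa using hC0.le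
    · exact hbd x y j hj h
  set δ : ℝ := Real.exp (-(6 * Real.sqrt n)) with hδ
  have hexpo : 2 * ε ^ 2 / (n * C ^ 2) = 2 * ε ^ 2 * (n : ℝ) ^ (1 - 2 * α) / c ^ 2 := by
    have e1 : (n : ℝ) ^ (1 - 2 * α) = n / ((n : ℝ) ^ α) ^ 2 := by
      rw [Real.rpow_sub hn', Real.rpow_one, mul_comm 2 α, Real.rpow_mul hn'.le]
      norm_num
    rw [e1, hC]
    have : (n : ℝ) ^ α ≠ 0 := by positivity
    field_simp
  have htail : 2 * Real.exp (-(2 * ε ^ 2 / (n * C ^ 2))) ≤ δ := by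
    rw [hexpo]
    calc 2 * Real.exp (-(2 * ε ^ 2 * (n : ℝ) ^ (1 - 2 * α) / c ^ 2))
        ≤ 2 * Real.exp (-(6 * Real.sqrt n + Real.log 2)) := by gcongr
      _ = δ := by
        rw [neg_add, Real.exp_add, Real.exp_neg (Real.log 2), Real.exp_log (by norm_num)]
        ring
  -- a profile of probability above δ contains a good sequence
  have hgood : ∀ q ∈ P, ∀ x : Fin n → X, δ < profProb n q (profile x) →
      |fhat x - f q| ≤ 2 * ε := by
    intro q hq x hx
    by_contra hbad
    push Not at hbad
    have hw := fun x : Fin n → X => sp_nonneg (hP q hq).1 x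
    have hsn := sp_summable (hP q hq).1 (hsm q hq) n
    have ht := mcd_tail (hP q hq).1 (hsm q hq) (hP q hq).2 C hC0 n hn ε hε fhat hg
    have hb := hbias q hq
    have : profProb n q (profile x) ≤
        ∑' y, (if ε < |fhat y - ∑' z, seqProb q z * fhat z| then seqProb q y else 0) := by
      unfold profProb
      refine Summable.tsum_le_tsum (fun y => ?_) ?_ ?_
      · split_ifs with h1 h2 h2
        · exact le_rfl
        · exfalso
          apply h2
          rw [hprofileBased y x h1]
          have := abs_sub_le (fhat x) (∑' z, seqProb q z * fhat z) (f q)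
          linarith
        · exact hw y
        · exact le_rfl
      · refine Summable.of_nonneg_of_le (fun x => ?_) (fun x => ?_) hsn
        · split_ifs; exacts [hw x, le_rfl]
        · split_ifs; exacts [le_rfl, hw x]
      · refine Summable.of_nonneg_of_le (fun x => ?_) (fun x => ?_) hsn
        · split_ifs; exacts [hw x, le_rfl]
        · split_ifs; exacts [le_rfl, hw x]
    linarith
  intro p hp
  have hw := fun x : Fin n → X => sp_nonneg (hP p hp).1 x
  have hsn := sp_summable (hP p hp).1 (hsm p hp) n
  have hδ0 : 0 < δ := Real.exp_pos _
  have hsmall : ∀ x : Fin n → X, 4 * ε < |f p - f (ptil (profile x))| →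
      profProb n p (profile x) ≤ δ / β := by
    intro x hx
    by_contra h
    push Not at h
    have h2 : δ ≤ δ / β := by rw [le_div_iff₀ hβ0]; nlinarith
    have h3 := hgood p hp x (by linarith)
    have h4 := hptil_max x p hp
    have h5 : δ < β * profProb n p (profile x) := by
      rw [div_lt_iff₀ hβ0] at h; linarith
    have h6 := hgood _ (hptil_mem x) x (by linarith)
    have h7 := abs_sub_le (f p) (fhat x) (f (ptil (profile x)))
    rw [abs_sub_comm (f p) (fhat x)] at h7
    linarith
  set S := (Finset.univ : Finset (Nat.Partition n)).image Nat.Partition.parts with hS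
  have hScard : (S.card : ℝ) ≤ Real.exp (4 * Real.sqrt n) := by
    refine le_trans ?_ (aux_part_bound n hn)
    exact_mod_cast Finset.card_image_le
  have hsI : ∀ φ : Multiset ℕ, Summable fun x : Fin n → X =>
      if 4 * ε < |f p - f (ptil φ)| then (if profile x = φ then seqProb p x else 0) else 0 := by
    intro φ
    refine Summable.of_nonneg_of_le (fun x => ?_) (fun x => ?_) hsn
    · split_ifs; exacts [hw x, le_rfl, le_rfl]
    · split_ifs; exacts [le_rfl, hw x, hw x]
  calc (∑' x : Fin n → X, if 4 * ε < |f p - f (ptil (profile x))| then seqProb p x else 0)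
      = ∑' x : Fin n → X, ∑ φ ∈ S,
        if 4 * ε < |f p - f (ptil φ)| then (if profile x = φ then seqProb p x else 0) else 0 := by
        refine tsum_congr fun x => ?_
        rw [Finset.sum_eq_single (profile x)]
        · simp
        · intro φ _ hφ
          have h' : ¬ profile x = φ := fun h => hφ h.symm
          simp only [if_neg h', ite_self]
        · intro h; exact absurd (aux_profile_mem x) h
    _ = ∑ φ ∈ S, ∑' x : Fin n → X,
        if 4 * ε < |f p - f (ptil φ)| then (if profile x = φ then seqProb p x else 0) else 0 :=
        Summable.tsum_finsetSum fun φ _ => hsI φ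
    _ ≤ ∑ φ ∈ S, δ / β := by
        refine Finset.sum_le_sum fun φ _ => ?_
        by_cases hb : 4 * ε < |f p - f (ptil φ)|
        · simp only [if_pos hb]
          by_cases hx : ∃ x : Fin n → X, profile x = φ
          · obtain ⟨x, rfl⟩ := hx
            exact hsmall x hb
          · push Not at hx
            simp only [hx, if_false, tsum_zero]
            positivity
        · simp only [if_neg hb, tsum_zero]
          positivity
    _ = S.card * (δ / β) := by rw [Finset.sum_const, nsmul_eq_mul]
    _ ≤ Real.exp (4 * Real.sqrt n) * (δ / Real.exp (-Real.sqrt n)) := by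
        gcongr
    _ = Real.exp (-Real.sqrt n) := by
        rw [hδ, ← Real.exp_sub, ← Real.exp_add]; congr 1; ring
end

section
/- Let n, m be positive integers with n ≤ m/2, let t = (m − n)/n, let r > 0, and let Z be a Poisson random variable with mean r. Then for every integer i ≥ 1, |1 + (−t)^i · P(Z ≥ i)| ≤ 1 + e^{r(t−1)}. In other words, the maximum coefficient of the smoothed Good–Toulmin support coverage estimator Ŝ_m is at most 1 + e^{r(t−1)}. -/
/-- The tail probability `P(Z ≥ i)` of a Poisson random variable `Z` with mean `r`. -/
noncomputable def poissonTail (r : ℝ) (i : ℕ) : ℝ :=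
  ∑' j : ℕ, if i ≤ j then Real.exp (-r) * r ^ j / (j.factorial : ℝ) else 0

/-- **Coefficient bound for the smoothed Good–Toulmin estimator.** For `n ≤ m/2`,
`t = (m - n)/n`, `r > 0`, and `Z ~ Poisson(r)`, the coefficient `1 + (-t)^i · P(Z ≥ i)`
of `φ_i` in the smoothed Good–Toulmin support coverage estimator satisfies
`|1 + (-t)^i · P(Z ≥ i)| ≤ 1 + e^{r(t-1)}` for every `i ≥ 1`. -/
theorem gt_coefficient_bound (n m : ℕ) (hn : 0 < n) (hm : 0 < m)
    (hnm : (n : ℝ) ≤ (m : ℝ) / 2)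
    (t : ℝ) (ht : t = ((m : ℝ) - n) / n)
    (r : ℝ) (hr : 0 < r)
    (i : ℕ) (hi : 1 ≤ i) :
    |1 + (-t) ^ i * poissonTail r i| ≤ 1 + Real.exp (r * (t - 1)) := by
  have hn' : (0 : ℝ) < n := by exact_mod_cast hn
  have ht1 : 1 ≤ t := by
    rw [ht, le_div_iff₀ hn']
    linarith
  have ht0 : 0 ≤ t := by linarith
  have hs : ∀ x : ℝ, HasSum (fun j : ℕ => x ^ j / (j.factorial : ℝ)) (Real.exp x) := by
    intro x
    rw [Real.exp_eq_exp_ℝ]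
    exact NormedSpace.expSeries_div_hasSum_exp x
  have h1 : HasSum (fun j : ℕ => Real.exp (-r) * ((r * t) ^ j / (j.factorial : ℝ)))
      (Real.exp (r * (t - 1))) := by
    have h := (hs (r * t)).mul_left (Real.exp (-r))
    rw [← Real.exp_add, show -r + r * t = r * (t - 1) by ring] at h
    exact h
  have h0 : Summable (fun j : ℕ => Real.exp (-r) * (r ^ j / (j.factorial : ℝ))) :=
    ((hs r).mul_left _).summable
  have hnn : ∀ j : ℕ, 0 ≤ (if i ≤ j then Real.exp (-r) * r ^ j / (j.factorial : ℝ) else 0) := by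
    intro j
    split_ifs
    · positivity
    · exact le_rfl
  have hsum : Summable
      (fun j : ℕ => if i ≤ j then Real.exp (-r) * r ^ j / (j.factorial : ℝ) else 0) := by
    refine Summable.of_nonneg_of_le hnn (fun j => ?_) h0
    split_ifs
    · exact (mul_div_assoc _ _ _).le
    · positivity
  have hp : 0 ≤ poissonTail r i := tsum_nonneg hnn
  have key : t ^ i * poissonTail r i ≤ Real.exp (r * (t - 1)) := by
    unfold poissonTail
    refine hasSum_le (fun j => ?_) (hsum.hasSum.mul_left (t ^ i)) h1
    split_ifs with hij
    · have hpow : t ^ i ≤ t ^ j := pow_le_pow_right₀ ht1 hij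
      calc t ^ i * (Real.exp (-r) * r ^ j / (j.factorial : ℝ))
          ≤ t ^ j * (Real.exp (-r) * r ^ j / (j.factorial : ℝ)) :=
            mul_le_mul_of_nonneg_right hpow (by positivity)
        _ = Real.exp (-r) * ((r * t) ^ j / (j.factorial : ℝ)) := by
            rw [mul_pow]; ring
    · rw [mul_zero]; positivity
  calc |1 + (-t) ^ i * poissonTail r i|
      ≤ |1| + |(-t) ^ i * poissonTail r i| := abs_add_le _ _
    _ = 1 + t ^ i * poissonTail r i := by
        rw [abs_one, abs_mul, abs_pow, abs_neg, abs_of_nonneg ht0, abs_of_nonneg hp]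
    _ ≤ _ := by linarith
end

section
/- Let α > 0, let n be an integer with n ≥ 2^{1/α}, let 0 < ε < 1, set r = log(3/ε), and let m be an integer with 2n ≤ m ≤ α·n·log(n·2^{−1/α})/log(3/ε). Let t = (m − n)/n and let Z be a Poisson random variable with mean r. Then for every integer i ≥ 1, (1/m)·|1 + (−t)^i·P(Z ≥ i)| ≤ n^α/n. In other words, the maximum coefficient of the normalized support coverage estimator Ŝ_m/m is at most n^α/n. -/
theorem tail_aux (r t : ℝ) (hr : 0 ≤ r) (ht : 1 ≤ t) (i : ℕ) :
    0 ≤ t ^ i * poissonTail r i ∧ t ^ i * poissonTail r i ≤ Real.exp (r * t - r) := by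
  have ht0 : 0 ≤ t := by linarith
  have hs : HasSum (fun j : ℕ => Real.exp (-r) * ((r * t) ^ j / (j.factorial : ℝ)))
      (Real.exp (r * t - r)) := by
    have h := (NormedSpace.expSeries_div_hasSum_exp (r * t)).mul_left (Real.exp (-r))
    rw [← Real.exp_eq_exp_ℝ, ← Real.exp_add] at h
    have e : r * t - r = -r + r * t := by ring
    rw [e]
    exact h
  have hle : ∀ j : ℕ, t ^ i * (if i ≤ j then Real.exp (-r) * r ^ j / (j.factorial : ℝ) else 0)
      ≤ Real.exp (-r) * ((r * t) ^ j / (j.factorial : ℝ)) := by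
    intro j
    split_ifs with h
    · have h1 : t ^ i ≤ t ^ j := pow_le_pow_right₀ ht h
      have h2 : 0 ≤ Real.exp (-r) * r ^ j / (j.factorial : ℝ) := by positivity
      calc _ ≤ t ^ j * (Real.exp (-r) * r ^ j / (j.factorial : ℝ)) := by gcongr
        _ = _ := by rw [mul_pow]; ring
    · rw [mul_zero]; positivity
  have h0 : ∀ j : ℕ, 0 ≤ t ^ i * (if i ≤ j then Real.exp (-r) * r ^ j / (j.factorial : ℝ) else 0) := by
    intro j
    split_ifs
    · positivity
    · simp
  unfold poissonTail
  rw [← tsum_mul_left]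
  refine ⟨tsum_nonneg h0, ?_⟩
  rw [← hs.tsum_eq]
  exact (Summable.of_nonneg_of_le h0 hle hs.summable).tsum_le_tsum hle hs.summable

/-- **Normalized coefficient bound for the support coverage estimator.** For `α > 0`,
`n ≥ 2^{1/α}`, `0 < ε < 1`, `r = log(3/ε)`, and `2n ≤ m ≤ α·n·log(n·2^{-1/α})/log(3/ε)`,
with `t = (m-n)/n` and `Z ~ Poisson(r)`, the coefficient of `φ_i` in `Ŝ_m / m` satisfies
`(1/m)·|1 + (-t)^i·P(Z ≥ i)| ≤ n^α / n` for every `i ≥ 1`. -/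
theorem gt_norm_coefficient_bound (α : ℝ) (hα : 0 < α)
    (n : ℕ) (hn : (2 : ℝ) ^ (1 / α) ≤ (n : ℝ))
    (ε : ℝ) (hε0 : 0 < ε) (hε1 : ε < 1)
    (r : ℝ) (hr : r = Real.log (3 / ε))
    (m : ℕ) (hm1 : 2 * n ≤ m)
    (hm2 : (m : ℝ) ≤ α * n * Real.log ((n : ℝ) * 2 ^ (-(1 / α))) / Real.log (3 / ε))
    (t : ℝ) (ht : t = ((m : ℝ) - n) / n)
    (i : ℕ) (hi : 1 ≤ i) :
    (1 / (m : ℝ)) * |1 + (-t) ^ i * poissonTail r i| ≤ (n : ℝ) ^ α / n := by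
  have hn0 : (0 : ℝ) < n := lt_of_lt_of_le (by positivity) hn
  have hm1' : 2 * (n : ℝ) ≤ m := by exact_mod_cast hm1
  have hm0 : (0 : ℝ) < m := by linarith
  have hrpos : 0 < r := by
    rw [hr]
    apply Real.log_pos
    rw [lt_div_iff₀ hε0]
    linarith
  rw [← hr] at hm2
  have ht1 : 1 ≤ t := by
    rw [ht, le_div_iff₀ hn0]
    linarith
  have hlog : Real.log ((n : ℝ) * 2 ^ (-(1 / α))) = Real.log n - 1 / α * Real.log 2 := by
    rw [Real.log_mul hn0.ne' (by positivity), Real.log_rpow (by norm_num)]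
    ring
  have hL : Real.log 2 ≤ α * Real.log n := by
    have h := Real.log_le_log (by positivity) hn
    rw [Real.log_rpow (by norm_num)] at h
    have h2 := mul_le_mul_of_nonneg_left h hα.le
    rwa [← mul_assoc, mul_one_div_cancel hα.ne', one_mul] at h2
  have hpow : (n : ℝ) ^ α = Real.exp (α * Real.log n) := by
    rw [Real.rpow_def_of_pos hn0, mul_comm]
  have h2 : 2 ≤ (n : ℝ) ^ α := by
    rw [hpow]
    calc (2 : ℝ) = Real.exp (Real.log 2) := (Real.exp_log (by norm_num)).symm
      _ ≤ _ := Real.exp_le_exp.mpr hL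
  have hrt : r * t - r ≤ α * Real.log n - Real.log 2 := by
    rw [le_div_iff₀ hrpos, hlog] at hm2
    have e : α * n * (Real.log n - 1 / α * Real.log 2) = (α * Real.log n - Real.log 2) * n := by
      field_simp
    rw [e] at hm2
    have e2 : r * t * n = r * m - r * n := by
      rw [ht]; field_simp
    have : 0 ≤ r * n := by positivity
    refine le_of_mul_le_mul_right ?_ hn0
    nlinarith
  obtain ⟨ha, hb⟩ := tail_aux r t hrpos.le ht1 i
  have hc : Real.exp (r * t - r) ≤ (n : ℝ) ^ α / 2 := by
    refine (Real.exp_le_exp.mpr hrt).trans ?_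
    rw [Real.exp_sub, Real.exp_log (by norm_num), hpow]
  have habs : |1 + (-t) ^ i * poissonTail r i| ≤ (n : ℝ) ^ α := by
    refine (abs_add_le _ _).trans ?_
    have : |(-t) ^ i * poissonTail r i| = t ^ i * poissonTail r i := by
      rw [← abs_of_nonneg ha, abs_mul, abs_mul, abs_pow, abs_pow, abs_neg]
    rw [this, abs_one]
    linarith
  rw [one_div_mul_eq_div]
  exact div_le_div₀ (by positivity) habs hn0 (by linarith)
end
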